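/- arXiv:2510.26655 — 5 statements merged into one kernel-verified Lean document; each statement's English description precedes it below -/
import Mathlib

section
/- Let F/ℚ be a finite separable field extension, V a finite-dimensional F-vector space, and ⟨·,·⟩ : V × V → ℚ a ℚ-bilinear form which is F-balanced, i.e. ⟨a•v, w⟩ = ⟨v, a•w⟩ for all a ∈ F and v, w ∈ V. Then there exists a unique F-bilinear form ⟨·,·⟩_F : V × V → F such that Tr_{F/ℚ}(⟨v,w⟩_F) = ⟨v,w⟩ for all v, w ∈ V. (Proposition 3.2, general form) -/
/-!
The trace form of a finite separable extension is nondegenerate, so every `ℚ`-linear functional on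
`F` is `a ↦ Tr (c * a)` for exactly one `c : F`. Applying this to `a ↦ B v (a • w)` defines
`Bf v w`, characterised by `Tr (Bf v w * a) = B v (a • w)` for all `a`. Bilinearity over `F` follows
by comparing traces, with balancedness giving homogeneity in `v`. Any `F`-bilinear form with trace
`B` satisfies the same characterisation, which gives uniqueness.
-/

theorem eq_of_trace_mul_eq {F : Type*} [Field F] [Algebra ℚ F] [FiniteDimensional ℚ F]
    [Algebra.IsSeparable ℚ F] {c d : F}
    (h : ∀ a : F, Algebra.trace ℚ F (c * a) = Algebra.trace ℚ F (d * a)) : c = d := by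
  apply ((Algebra.traceForm ℚ F).toDual (traceForm_nondegenerate ℚ F)).injective
  ext a
  simpa only [LinearMap.BilinForm.toDual_def, Algebra.traceForm_apply] using h a

/-- Proposition 3.2, general form.
Let `F/ℚ` be a finite separable field extension, `V` a finite-dimensional `F`-vector
space, and `B : V × V → ℚ` a `ℚ`-bilinear form which is `F`-balanced, i.e.
`B (a • v) w = B v (a • w)` for all `a : F`. Then there exists a unique `F`-bilinear
form `Bf : V × V → F` such that `Tr_{F/ℚ} (Bf v w) = B v w` for all `v w`. -/
theorem stmt_0
    (F : Type*) [Field F] [Algebra ℚ F] [FiniteDimensional ℚ F]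
    [Algebra.IsSeparable ℚ F]
    (V : Type*) [AddCommGroup V] [Module ℚ V] [Module F V] [IsScalarTower ℚ F V]
    [FiniteDimensional F V]
    (B : V →ₗ[ℚ] V →ₗ[ℚ] ℚ)
    (hbal : ∀ (a : F) (v w : V), B (a • v) w = B v (a • w)) :
    ∃! Bf : V →ₗ[F] V →ₗ[F] F,
      ∀ v w : V, Algebra.trace ℚ F (Bf v w) = B v w := by
  have hex : ∀ v w : V, ∃ c : F, ∀ a : F, Algebra.trace ℚ F (c * a) = B v (a • w) := by
    intro v w
    refine ⟨((Algebra.traceForm ℚ F).toDual (traceForm_nondegenerate ℚ F)).symm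
      ((B v).comp ((LinearMap.toSpanSingleton F V w).restrictScalars ℚ)), fun a => ?_⟩
    rw [← Algebra.traceForm_apply, LinearMap.BilinForm.apply_toDual_symm_apply]
    simp
  choose g hg using hex
  refine ⟨LinearMap.mk₂ F g ?_ ?_ ?_ ?_, ?_, ?_⟩
  · intro v v' w
    refine eq_of_trace_mul_eq fun a => ?_
    simp only [add_mul, map_add, hg, LinearMap.add_apply]
  · intro c v w
    refine eq_of_trace_mul_eq fun a => ?_
    rw [smul_eq_mul, mul_comm c, mul_assoc, hg, hg, hbal, smul_smul]
  · intro v w w'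
    refine eq_of_trace_mul_eq fun a => ?_
    simp only [add_mul, map_add, hg, smul_add]
  · intro c v w
    refine eq_of_trace_mul_eq fun a => ?_
    rw [smul_eq_mul, mul_comm c, mul_assoc, hg, hg, smul_smul, mul_comm]
  · intro v w
    simpa using hg v w 1
  · intro Bf hBf
    ext v w
    refine eq_of_trace_mul_eq fun a => ?_
    rw [LinearMap.mk₂_apply, hg, ← hBf, map_smul, smul_eq_mul, mul_comm]
end

section
/- Let B = ℍ[ℚ, c₁, c₂] be a quaternion algebra over ℚ with standard involution star, and define the ℚ-bilinear form ⟨b₁, b₂⟩ := (b₁·star(b₂) + b₂·star(b₁)) on B (the polar form of the norm). Let F₁, F₂ be quadratic field extensions of ℚ with nontrivial ℚ-automorphisms σ₁, σ₂, and let α₁ : F₁ → B and α₂ : F₂ → B be ℚ-algebra homomorphisms. Then for all x ∈ F₁, y ∈ F₂ and b₁, b₂ ∈ B, one has ⟨α₁(x)·b₁·α₂(y), b₂⟩ = ⟨b₁, α₁(σ₁(x))·b₂·α₂(σ₂(y))⟩. (Equation (3.4): the trace form on B is balanced for the L = F₁⊗F₂ action twisted by the involution ε = σ₁⊗σ₂)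 -/
/-!
The embeddings turn Galois conjugation into quaternion conjugation: `α (σ x) = star (α x)`
(`map_conj_eq_star`). Indeed `α x` is a root of its reduced characteristic polynomial
`X² - t X + n` with rational coefficients; since `α` is injective, so is `x`, and then also `σ x`.
Hence `σ x = t - x`, or `σ x = x`, in which case `x` is rational because the subalgebra fixed by
`σ` is proper in a quadratic field. Given this, the identity is `trd (a u) = trd (u a)` for
`a = α₁ x` and `u = b₁ · α₂ y · star b₂`.
-/

open Quaternion

/-- An embedding of a quadratic field into a quaternion algebra intertwines the nontrivial
automorphism with quaternion conjugation. The constants `c₁, c₂` may vanish. -/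
lemma map_conj_eq_star {c₁ c₂ : ℚ} {F : Type*} [Field F] [Algebra ℚ F]
    (hdim : Module.finrank ℚ F = 2) (σ : F ≃ₐ[ℚ] F) (hσ : σ ≠ AlgEquiv.refl)
    (α : F →ₐ[ℚ] ℍ[ℚ, c₁, c₂]) (x : F) : α (σ x) = star (α x) := by
  have hstar : star (α x) = algebraMap ℚ _ (2 * (α x).re) - α x := by
    rw [QuaternionAlgebra.star_eq_two_re_sub, zero_mul, add_zero]
    rfl
  have hnorm : α x * star (α x) = algebraMap ℚ _ (α x * star (α x)).re :=
    QuaternionAlgebra.mul_star_eq_coe _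
  generalize 2 * (α x).re = t at hstar
  generalize (α x * star (α x)).re = n at hnorm
  have hx : x * (algebraMap ℚ F t - x) = algebraMap ℚ F n := by
    apply α.toRingHom.injective
    change α _ = α _
    rw [map_mul, map_sub, AlgHom.commutes, AlgHom.commutes, ← hstar, hnorm]
  have hσx : σ x * (algebraMap ℚ F t - σ x) = algebraMap ℚ F n := by
    simpa using congrArg σ hx
  have hprod : (σ x - x) * (σ x - (algebraMap ℚ F t - x)) = 0 := by
    linear_combination hx - hσx
  rcases mul_eq_zero.mp hprod with h | h
  · -- The subalgebra fixed by `σ` is `⊥`, as a quadratic extension has only `⊥` and `⊤`.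
    have := Subalgebra.isSimpleOrder_of_finrank hdim
    have hmem : x ∈ AlgHom.equalizer (σ : F →ₐ[ℚ] F) (AlgHom.id ℚ F) := sub_eq_zero.mp h
    rcases eq_bot_or_eq_top (AlgHom.equalizer (σ : F →ₐ[ℚ] F) (AlgHom.id ℚ F)) with hE | hE
    · rw [hE] at hmem
      obtain ⟨q, rfl⟩ := Algebra.mem_bot.mp hmem
      rw [AlgEquiv.commutes, AlgHom.commutes]
      exact (QuaternionAlgebra.star_coe q).symm
    · refine absurd (AlgEquiv.ext fun z => ?_) hσ
      have hz : z ∈ AlgHom.equalizer (σ : F →ₐ[ℚ] F) (AlgHom.id ℚ F) := hE ▸ Algebra.mem_top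
      exact hz
  · rw [sub_eq_zero.mp h, hstar, map_sub, AlgHom.commutes]

/-- The reduced trace satisfies `trd (a u) = trd (u a)`. -/
lemma mul_add_star_mul_comm {c₁ c₂ : ℚ} (a u : ℍ[ℚ, c₁, c₂]) :
    a * u + star (a * u) = u * a + star (u * a) := by
  ext <;> simp <;> ring

/-- Equation (3.4).
Let `B = ℍ[ℚ, c₁, c₂]` be a quaternion algebra over `ℚ` with standard involution
`star`, and `⟨b₁, b₂⟩ := b₁ · star b₂ + b₂ · star b₁` the polar form of the norm.
Let `F₁, F₂` be quadratic fields with nontrivial automorphisms `σ₁, σ₂` and let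
`α₁ : F₁ → B`, `α₂ : F₂ → B` be `ℚ`-algebra homomorphisms.  Then for all
`x ∈ F₁`, `y ∈ F₂`, `b₁ b₂ ∈ B`:
`⟨α₁ x · b₁ · α₂ y, b₂⟩ = ⟨b₁, α₁ (σ₁ x) · b₂ · α₂ (σ₂ y)⟩`. -/
theorem stmt_5
    (c₁ c₂ : ℚ)
    (F₁ F₂ : Type*) [Field F₁] [Field F₂] [Algebra ℚ F₁] [Algebra ℚ F₂]
    (hdim₁ : Module.finrank ℚ F₁ = 2) (hdim₂ : Module.finrank ℚ F₂ = 2)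
    (σ₁ : F₁ ≃ₐ[ℚ] F₁) (hσ₁ : σ₁ ≠ AlgEquiv.refl)
    (σ₂ : F₂ ≃ₐ[ℚ] F₂) (hσ₂ : σ₂ ≠ AlgEquiv.refl)
    (α₁ : F₁ →ₐ[ℚ] ℍ[ℚ, c₁, c₂]) (α₂ : F₂ →ₐ[ℚ] ℍ[ℚ, c₁, c₂]) :
    ∀ (x : F₁) (y : F₂) (b₁ b₂ : ℍ[ℚ, c₁, c₂]),
      (α₁ x * b₁ * α₂ y) * star b₂ + b₂ * star (α₁ x * b₁ * α₂ y)
        = b₁ * star (α₁ (σ₁ x) * b₂ * α₂ (σ₂ y))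
          + (α₁ (σ₁ x) * b₂ * α₂ (σ₂ y)) * star b₁ := by
  intro x y b₁ b₂
  rw [map_conj_eq_star hdim₁ σ₁ hσ₁, map_conj_eq_star hdim₂ σ₂ hσ₂]
  simpa only [star_mul, star_star, mul_assoc] using
    mul_add_star_mul_comm (α₁ x) (b₁ * α₂ y * star b₂)
end

section
/- Let D₁, D₂ > 1 be coprime squarefree integers, F_j = ℚ(√D_j) with norm Nm_j : F_j → ℚ, L = F₁ ⊗_ℚ F₂, T(ℚ) = {(t₁, t₂) ∈ F₁^× × F₂^× : Nm₁(t₁) = Nm₂(t₂)}, and η(t₁, t₂) := t₁ ⊗ t₂⁻¹ ∈ L^×. Then the kernel of the group homomorphism η is exactly the diagonally embedded ℚ^×, i.e. η(t₁, t₂) = 1 if and only if t₁ = t₂ = q for some q ∈ ℚ^×. (Proposition 3.6, kernel) -/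
/-!
If `x ⊗ y = 1` in `A ⊗ B` with `x` outside the line `ℚ · 1`, some linear functional on `A` kills `1`
but not `x`; contracting the first factor along it gives `y = 0`, which is absurd. So `t₁` is a
rational number `q`, and then `1 ⊗ (q t₂⁻¹) = 1 ⊗ 1` forces `t₂ = q` because `F₂ → F₁ ⊗ F₂` is
injective.
-/

open TensorProduct

/-- A pure tensor equal to `1` has a scalar first factor. -/
lemma mem_range_of_tmul_eq_one {K A B : Type*} [Field K] [Field A] [Field B] [Algebra K A]
    [Algebra K B] {x : A} {y : B} (hy : y ≠ 0) (h : x ⊗ₜ[K] y = (1 : A ⊗[K] B)) :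
    ∃ q : K, x = algebraMap K A q := by
  by_contra hx
  have hx' : x ∉ Submodule.span K {(1 : A)} := by
    rw [Submodule.mem_span_singleton]
    rintro ⟨q, hq⟩
    exact hx ⟨q, by rw [Algebra.algebraMap_eq_smul_one, hq]⟩
  obtain ⟨f, hfx, hf⟩ := Submodule.exists_le_ker_of_notMem hx'
  have hf1 : f 1 = 0 := hf (Submodule.mem_span_singleton_self 1)
  -- contract the first factor along `f`
  have key := congrArg (fun z => TensorProduct.lid K B (LinearMap.rTensor B f z)) h
  simp only [Algebra.TensorProduct.one_def, LinearMap.rTensor_tmul, TensorProduct.lid_tmul, hf1,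
    zero_smul] at key
  exact (smul_ne_zero hfx hy) key

/-- Proposition 3.6, kernel.
With `F_j = ℚ(√D_j)` for coprime squarefree `D₁, D₂ > 1`, `L = F₁ ⊗_ℚ F₂`,
`T(ℚ) = {(t₁, t₂) ∈ F₁^× × F₂^× : Nm₁ t₁ = Nm₂ t₂}` and `η (t₁, t₂) = t₁ ⊗ t₂⁻¹`,
the kernel of `η` is exactly the diagonally embedded `ℚ^×`: for `(t₁, t₂) ∈ T(ℚ)`,
`η (t₁, t₂) = 1` iff `t₁ = t₂ = q` for some `q ∈ ℚ^×`. -/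
theorem stmt_9
    (D₁ D₂ : ℤ) (hD₁ : 1 < D₁) (hD₂ : 1 < D₂)
    (hsf₁ : Squarefree D₁) (hsf₂ : Squarefree D₂) (hcop : IsCoprime D₁ D₂)
    (F₁ F₂ : Type*) [Field F₁] [Field F₂] [Algebra ℚ F₁] [Algebra ℚ F₂]
    (s₁ : F₁) (s₂ : F₂) (hs₁ : s₁ ^ 2 = (D₁ : F₁)) (hs₂ : s₂ ^ 2 = (D₂ : F₂))
    (hspan₁ : ∀ x : F₁, ∃ a b : ℚ, x = algebraMap ℚ F₁ a + b • s₁)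
    (hspan₂ : ∀ x : F₂, ∃ a b : ℚ, x = algebraMap ℚ F₂ a + b • s₂)
    (Nm₁ : F₁ → ℚ)
    (hNm₁ : ∀ a b : ℚ, Nm₁ (algebraMap ℚ F₁ a + b • s₁) = a ^ 2 - D₁ * b ^ 2)
    (Nm₂ : F₂ → ℚ)
    (hNm₂ : ∀ a b : ℚ, Nm₂ (algebraMap ℚ F₂ a + b • s₂) = a ^ 2 - D₂ * b ^ 2)
    (t₁ : F₁) (t₂ : F₂) (ht₁ : t₁ ≠ 0) (ht₂ : t₂ ≠ 0)
    (hT : Nm₁ t₁ = Nm₂ t₂) :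
    t₁ ⊗ₜ[ℚ] t₂⁻¹ = (1 : F₁ ⊗[ℚ] F₂) ↔
      ∃ q : ℚ, q ≠ 0 ∧ t₁ = algebraMap ℚ F₁ q ∧ t₂ = algebraMap ℚ F₂ q := by
  constructor
  · intro h
    obtain ⟨q, rfl⟩ := mem_range_of_tmul_eq_one (inv_ne_zero ht₂) h
    refine ⟨q, fun hq => ht₁ (by simp [hq]), rfl, ?_⟩
    have h' : (Algebra.TensorProduct.includeRight : F₂ →ₐ[ℚ] F₁ ⊗[ℚ] F₂) (q • t₂⁻¹) =
        Algebra.TensorProduct.includeRight (1 : F₂) := by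
      rw [map_one, ← h, Algebra.TensorProduct.includeRight_apply, Algebra.algebraMap_eq_smul_one,
        TensorProduct.smul_tmul]
    have h2 : q • t₂⁻¹ = 1 :=
      Algebra.TensorProduct.includeRight_injective (algebraMap ℚ F₁).injective h'
    rw [Algebra.smul_def] at h2
    exact (eq_of_mul_inv_eq_one h2).symm
  · rintro ⟨q, hq, rfl, rfl⟩
    rw [Algebra.algebraMap_eq_smul_one, TensorProduct.smul_tmul, Algebra.smul_def,
      mul_inv_cancel₀ ht₂, Algebra.TensorProduct.one_def]
end

section
/- Let D₁, D₂ > 1 be coprime squarefree integers, F_j = ℚ(√D_j) with norm Nm_j and nontrivial automorphism σ_j, L = F₁ ⊗_ℚ F₂, ε = σ₁ ⊗ σ₂ the ℚ-algebra automorphism of L, T(ℚ) = {(t₁, t₂) ∈ F₁^× × F₂^× : Nm₁(t₁) = Nm₂(t₂)}, and η(t₁, t₂) := t₁ ⊗ t₂⁻¹. Then η maps T(ℚ) surjectively onto L¹ := {x ∈ L^× : x·ε(x) = 1}. (Proposition 3.6, surjectivity) -/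
open TensorProduct

/-!
Write `x = a + b u + c v + d u v` with `u = s₁ ⊗ 1`, `v = 1 ⊗ s₂` and rational coefficients.
As `ε` negates `u` and `v`, the coefficient of `u v` in `x · ε x` is `2 (a d - b c)`, so
`x · ε x = 1` forces `a d = b c` (`coeff_det_eq_zero`). This says that the coefficient matrix of `x`
has rank at most one, i.e. that `x = t ⊗ w` is a pure tensor (`exists_pure`). Then
`x · ε x = Nm₁ t · Nm₂ w = 1`, and `(t, w⁻¹)` is the required preimage.

That `1` and `u v` are independent over `ℚ` follows by applying `σ₁ ⊗ id`, which fixes `1` and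
negates the unit `u v`.
-/

section

variable {F₁ F₂ : Type*} [Field F₁] [Field F₂] [Algebra ℚ F₁] [Algebra ℚ F₂]

lemma exists_coeffs (s₁ : F₁) (s₂ : F₂)
    (hspan₁ : ∀ x : F₁, ∃ a b : ℚ, x = algebraMap ℚ F₁ a + b • s₁)
    (hspan₂ : ∀ x : F₂, ∃ a b : ℚ, x = algebraMap ℚ F₂ a + b • s₂) (x : F₁ ⊗[ℚ] F₂) :
    ∃ a b c d : ℚ, x = a • (1 ⊗ₜ[ℚ] 1) + b • (s₁ ⊗ₜ[ℚ] 1) + c • (1 ⊗ₜ[ℚ] s₂)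
      + d • (s₁ ⊗ₜ[ℚ] s₂) := by
  induction x with
  | zero => exact ⟨0, 0, 0, 0, by simp⟩
  | tmul y z =>
    obtain ⟨a, b, rfl⟩ := hspan₁ y
    obtain ⟨c, d, rfl⟩ := hspan₂ z
    refine ⟨a * c, b * c, a * d, b * d, ?_⟩
    simp only [Algebra.algebraMap_eq_smul_one, add_tmul, tmul_add, ← smul_tmul', tmul_smul]
    module
  | add y z hy hz =>
    obtain ⟨a, b, c, d, rfl⟩ := hy
    obtain ⟨a', b', c', d', rfl⟩ := hz
    exact ⟨a + a', b + b', c + c', d + d', by module⟩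

/-- A tensor whose `2 × 2` coefficient matrix is singular is a pure tensor. -/
lemma exists_pure (s₁ : F₁) (s₂ : F₂) (a b c d : ℚ) (h : a * d = b * c) :
    ∃ (t : F₁) (w : F₂), a • ((1 : F₁) ⊗ₜ[ℚ] (1 : F₂)) + b • (s₁ ⊗ₜ[ℚ] 1) + c • (1 ⊗ₜ[ℚ] s₂)
      + d • (s₁ ⊗ₜ[ℚ] s₂) = t ⊗ₜ[ℚ] w := by
  by_cases ha : a = 0
  · subst ha
    rcases mul_eq_zero.1 (by simpa using h.symm : b * c = 0) with rfl | rfl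
    · refine ⟨c • 1 + d • s₁, s₂, ?_⟩
      simp only [add_tmul, ← smul_tmul']
      module
    · refine ⟨s₁, b • 1 + d • s₂, ?_⟩
      simp only [tmul_add, tmul_smul]
      module
  · have hd : d = b * (c / a) := by field_simp; linarith
    have hc : c = a * (c / a) := by field_simp
    refine ⟨a • 1 + b • s₁, 1 + (c / a) • s₂, ?_⟩
    generalize c / a = e at hd hc
    subst hd hc
    simp only [add_tmul, tmul_add, ← smul_tmul', tmul_smul]
    module

/-- The coefficient of `s₁ ⊗ s₂` in `x · ε x` is twice the determinant of the coefficients of `x`,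
and it vanishes if `x · ε x = 1`. -/
lemma coeff_det_eq_zero {D₁ D₂ : ℤ} (hD₁ : D₁ ≠ 0) (hD₂ : D₂ ≠ 0) {s₁ : F₁} {s₂ : F₂}
    (hs₁ : s₁ ^ 2 = (D₁ : F₁)) (hs₂ : s₂ ^ 2 = (D₂ : F₂))
    (σ₁ : F₁ ≃ₐ[ℚ] F₁) (hσ₁ : σ₁ s₁ = -s₁) (σ₂ : F₂ ≃ₐ[ℚ] F₂) (hσ₂ : σ₂ s₂ = -s₂)
    (a b c d : ℚ) (x : F₁ ⊗[ℚ] F₂)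
    (hxe : x = a • (1 ⊗ₜ[ℚ] 1) + b • (s₁ ⊗ₜ[ℚ] 1) + c • (1 ⊗ₜ[ℚ] s₂) + d • (s₁ ⊗ₜ[ℚ] s₂))
    (hx : x * Algebra.TensorProduct.congr σ₁ σ₂ x = 1) : a * d = b * c := by
  have e₁ : s₁ * s₁ = (D₁ : ℚ) • (1 : F₁) := by
    rw [← sq, hs₁, ← Algebra.algebraMap_eq_smul_one]; simp
  have e₂ : s₂ * s₂ = (D₂ : ℚ) • (1 : F₂) := by
    rw [← sq, hs₂, ← Algebra.algebraMap_eq_smul_one]; simp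
  have key : (a ^ 2 + d ^ 2 * D₁ * D₂ - b ^ 2 * D₁ - c ^ 2 * D₂) • ((1 : F₁) ⊗ₜ[ℚ] (1 : F₂))
      + (2 * (a * d - b * c)) • (s₁ ⊗ₜ[ℚ] s₂) = 1 := by
    rw [← hx, hxe]
    simp only [Algebra.TensorProduct.congr_apply, map_add, map_smul,
      Algebra.TensorProduct.map_tmul, AlgEquiv.coe_toAlgHom, map_one, hσ₁, hσ₂, neg_tmul, tmul_neg,
      mul_add, add_mul, mul_neg, smul_neg, smul_mul_assoc, mul_smul_comm,
      Algebra.TensorProduct.tmul_mul_tmul, mul_one, one_mul, e₁, e₂, ← smul_tmul', tmul_smul]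
    module
  have key' := congrArg (Algebra.TensorProduct.congr σ₁ (AlgEquiv.refl : F₂ ≃ₐ[ℚ] F₂)) key
  simp only [Algebra.TensorProduct.congr_apply, map_add, map_smul,
    Algebra.TensorProduct.map_tmul, AlgEquiv.coe_toAlgHom, map_one, hσ₁, neg_tmul,
    AlgEquiv.coe_refl, id, smul_neg] at key'
  have hz : (4 * (a * d - b * c)) • (s₁ ⊗ₜ[ℚ] s₂) = 0 := by
    have := congrArg₂ (· - ·) key key'
    simp only [sub_self] at this
    rw [← this]
    module
  have hz' := congrArg (· * (s₁ ⊗ₜ[ℚ] s₂)) hz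
  simp only [smul_mul_assoc, Algebra.TensorProduct.tmul_mul_tmul, e₁, e₂, ← smul_tmul', tmul_smul,
    zero_mul, smul_smul, ← Algebra.TensorProduct.one_def] at hz'
  rw [smul_eq_zero] at hz'
  have h1 : (4 * (a * d - b * c)) * D₁ * D₂ = 0 := by
    rcases hz' with h | h
    · linarith
    · exact absurd h one_ne_zero
  have q₁ : (D₁ : ℚ) ≠ 0 := by exact_mod_cast hD₁
  have q₂ : (D₂ : ℚ) ≠ 0 := by exact_mod_cast hD₂
  have := (mul_eq_zero.1 ((mul_eq_zero.1 h1).resolve_right q₂)).resolve_right q₁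
  linarith

end

/-- Proposition 3.6, surjectivity.
With `F_j = ℚ(√D_j)` for coprime squarefree `D₁, D₂ > 1`, `L = F₁ ⊗_ℚ F₂`,
`ε = σ₁ ⊗ σ₂`, `T(ℚ) = {(t₁, t₂) : Nm₁ t₁ = Nm₂ t₂}` and `η (t₁, t₂) = t₁ ⊗ t₂⁻¹`,
the map `η` maps `T(ℚ)` surjectively onto `L¹ = {x : x · ε x = 1}`. -/
theorem stmt_10
    (D₁ D₂ : ℤ) (hD₁ : 1 < D₁) (hD₂ : 1 < D₂)
    (hsf₁ : Squarefree D₁) (hsf₂ : Squarefree D₂) (hcop : IsCoprime D₁ D₂)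
    (F₁ F₂ : Type*) [Field F₁] [Field F₂] [Algebra ℚ F₁] [Algebra ℚ F₂]
    (s₁ : F₁) (s₂ : F₂) (hs₁ : s₁ ^ 2 = (D₁ : F₁)) (hs₂ : s₂ ^ 2 = (D₂ : F₂))
    (hspan₁ : ∀ x : F₁, ∃ a b : ℚ, x = algebraMap ℚ F₁ a + b • s₁)
    (hspan₂ : ∀ x : F₂, ∃ a b : ℚ, x = algebraMap ℚ F₂ a + b • s₂)
    (σ₁ : F₁ ≃ₐ[ℚ] F₁) (hσ₁ : σ₁ s₁ = -s₁)
    (σ₂ : F₂ ≃ₐ[ℚ] F₂) (hσ₂ : σ₂ s₂ = -s₂)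
    (Nm₁ : F₁ → ℚ) (hNm₁ : ∀ x : F₁, algebraMap ℚ F₁ (Nm₁ x) = x * σ₁ x)
    (Nm₂ : F₂ → ℚ) (hNm₂ : ∀ x : F₂, algebraMap ℚ F₂ (Nm₂ x) = x * σ₂ x)
    (x : F₁ ⊗[ℚ] F₂)
    (hx : x * Algebra.TensorProduct.congr σ₁ σ₂ x = 1) :
    ∃ (t₁ : F₁) (t₂ : F₂), t₁ ≠ 0 ∧ t₂ ≠ 0 ∧ Nm₁ t₁ = Nm₂ t₂ ∧
      x = t₁ ⊗ₜ[ℚ] t₂⁻¹ := by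
  obtain ⟨a, b, c, d, hxe⟩ := exists_coeffs s₁ s₂ hspan₁ hspan₂ x
  have hdet := coeff_det_eq_zero (by omega) (by omega) hs₁ hs₂ σ₁ hσ₁ σ₂ hσ₂ a b c d x hxe hx
  obtain ⟨t, w, htw⟩ := exists_pure s₁ s₂ a b c d hdet
  rw [← hxe] at htw
  subst htw
  have hN : Nm₁ t * Nm₂ w = 1 := by
    simp only [Algebra.TensorProduct.congr_apply, Algebra.TensorProduct.map_tmul,
      AlgEquiv.coe_toAlgHom, Algebra.TensorProduct.tmul_mul_tmul, ← hNm₁, ← hNm₂,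
      Algebra.algebraMap_eq_smul_one, ← smul_tmul', tmul_smul, smul_smul,
      ← Algebra.TensorProduct.one_def] at hx
    rw [← Algebra.algebraMap_eq_smul_one] at hx
    apply (algebraMap ℚ (F₁ ⊗[ℚ] F₂)).injective
    rw [mul_comm, hx, map_one]
  have ht : t ≠ 0 := by
    rintro rfl
    have : Nm₁ 0 = 0 := (algebraMap ℚ F₁).injective (by simp [hNm₁])
    simp [this] at hN
  have hw : w ≠ 0 := by
    rintro rfl
    have : Nm₂ 0 = 0 := (algebraMap ℚ F₂).injective (by simp [hNm₂])
    simp [this] at hN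
  refine ⟨t, w⁻¹, ht, inv_ne_zero hw, ?_, by rw [inv_inv]⟩
  have hinv : Nm₂ w⁻¹ = (Nm₂ w)⁻¹ :=
    (algebraMap ℚ F₂).injective (by rw [map_inv₀, hNm₂, hNm₂, map_inv₀, mul_inv])
  rw [hinv]
  exact eq_inv_of_mul_eq_one_left hN
end

section
/- Let x, y ∈ ℝ be nonzero. If x·y > 0, then ∫₀^∞ (x/t + t·y)·exp(−π((x/t)² + (t·y)²)) dt/t = sgn(x)·exp(−2π·x·y), and if x·y < 0 the integral equals 0. (Lemma 3.16) -/
/-!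
Completing the square gives `(x/t)² + (ty)² = (ty - x/t)² + 2xy`, and `(x/t + ty) dt/t` is the
differential of `u = ty - x/t`. For `x, y > 0` this `u` is a bijection from `(0, ∞)` onto `ℝ`, so
the integral is `exp(-2πxy)` times the Gaussian integral `∫ exp(-πu²) du = 1`
(`integral_of_pos`). The case `x, y < 0` follows because the integrand is odd in `(x, y)`.
If `xy < 0`, put `c = -x/y > 0`: the inversion `t ↦ c/t` preserves `dt/t` and sends
`(x/t, ty)` to `(-ty, -x/t)`, which changes the sign of the integrand, so the integral equals its
own negative (`integral_of_mul_neg`).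
-/

open Real MeasureTheory

/-- The change of variables `u = ty - x/t` reduces the integral to the Gaussian one. -/
lemma integral_of_pos (x y : ℝ) (hx : 0 < x) (hy : 0 < y) :
    ∫ t in Set.Ioi (0 : ℝ),
        (x / t + t * y) * Real.exp (-(π * ((x / t) ^ 2 + (t * y) ^ 2))) / t
      = Real.exp (-(2 * π * x * y)) := by
  have hder : ∀ t ∈ Set.Ioi (0 : ℝ),
      HasDerivWithinAt (fun t : ℝ => t * y - x / t) (y + x / t ^ 2) (Set.Ioi 0) t := by
    intro t ht
    have ht0 : t ≠ 0 := (Set.mem_Ioi.mp ht).ne'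
    have h := ((hasDerivAt_id t).mul_const y).sub ((hasDerivAt_const t x).div (hasDerivAt_id t) ht0)
    refine (h.congr_deriv ?_).hasDerivWithinAt
    simp [neg_div]
  have hinj : Set.InjOn (fun t : ℝ => t * y - x / t) (Set.Ioi 0) := by
    refine StrictMonoOn.injOn fun a ha b hb hab => ?_
    have h1 : a * y < b * y := mul_lt_mul_of_pos_right hab hy
    have h2 : x / b < x / a := div_lt_div_of_pos_left hx ha hab
    change a * y - x / a < b * y - x / b
    linarith
  have himg : (fun t : ℝ => t * y - x / t) '' Set.Ioi 0 = Set.univ := by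
    refine Set.eq_univ_of_forall fun u => ?_
    -- The preimage of `u` is the positive root of `y t² - u t - x = 0`.
    have hs : √(u ^ 2 + 4 * x * y) ^ 2 = u ^ 2 + 4 * x * y := Real.sq_sqrt (by positivity)
    have hlt : |u| < √(u ^ 2 + 4 * x * y) := by
      rw [← Real.sqrt_sq_eq_abs]
      exact Real.sqrt_lt_sqrt (sq_nonneg u) (by linarith [mul_pos hx hy])
    have hpos : 0 < u + √(u ^ 2 + 4 * x * y) := by linarith [neg_abs_le u]
    refine ⟨(u + √(u ^ 2 + 4 * x * y)) / (2 * y), Set.mem_Ioi.mpr (by positivity), ?_⟩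
    generalize √(u ^ 2 + 4 * x * y) = s at *
    have hne := hpos.ne'
    change (u + s) / (2 * y) * y - x / ((u + s) / (2 * y)) = u
    field_simp
    linear_combination hs
  have key := integral_image_eq_integral_abs_deriv_smul measurableSet_Ioi hder hinj
    (fun u => Real.exp (-π * u ^ 2))
  rw [himg, setIntegral_univ, integral_gaussian, div_self pi_ne_zero, Real.sqrt_one] at key
  rw [← mul_one (Real.exp (-(2 * π * x * y))), key, ← integral_const_mul]
  refine setIntegral_congr_fun measurableSet_Ioi fun t ht => ?_
  have ht0 : 0 < t := ht
  have habs : |y + x / t ^ 2| = (x / t + t * y) / t := by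
    rw [abs_of_pos (by positivity)]
    field_simp
    ring
  have hexp : Real.exp (-(π * ((x / t) ^ 2 + (t * y) ^ 2)))
      = Real.exp (-(2 * π * x * y)) * Real.exp (-π * (t * y - x / t) ^ 2) := by
    rw [← Real.exp_add]
    congr 1
    field_simp
    ring
  simp only [smul_eq_mul]
  rw [habs, hexp]
  ring

/-- The inversion `t ↦ (-x/y)/t` shows that the integral equals its own negative. -/
lemma integral_of_mul_neg (x y : ℝ) (hxy : x * y < 0) :
    ∫ t in Set.Ioi (0 : ℝ),
        (x / t + t * y) * Real.exp (-(π * ((x / t) ^ 2 + (t * y) ^ 2))) / t = 0 := by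
  have hx : x ≠ 0 := left_ne_zero_of_mul hxy.ne
  have hy : y ≠ 0 := right_ne_zero_of_mul hxy.ne
  obtain ⟨c, hc, rfl⟩ : ∃ c : ℝ, 0 < c ∧ x = -(c * y) := by
    refine ⟨-(x * y) / y ^ 2, div_pos (by linarith) (by positivity), ?_⟩
    field_simp
  have hder : ∀ t ∈ Set.Ioi (0 : ℝ),
      HasDerivWithinAt (fun t : ℝ => c / t) (-(c / t ^ 2)) (Set.Ioi 0) t := by
    intro t ht
    have ht0 : t ≠ 0 := (Set.mem_Ioi.mp ht).ne'
    have h := (hasDerivAt_const t c).div (hasDerivAt_id t) ht0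
    refine (h.congr_deriv ?_).hasDerivWithinAt
    simp [neg_div]
  have hinv : ∀ t : ℝ, c / (c / t) = t := fun t => div_div_cancel₀ hc.ne'
  have hinj : Set.InjOn (fun t : ℝ => c / t) (Set.Ioi 0) := fun a _ b _ hab => by
    rw [← hinv a, ← hinv b]
    exact congrArg (c / ·) hab
  have himg : (fun t : ℝ => c / t) '' Set.Ioi 0 = Set.Ioi 0 := by
    ext u
    constructor
    · rintro ⟨t, ht, rfl⟩
      exact div_pos hc ht
    · exact fun hu => ⟨c / u, div_pos hc hu, hinv u⟩
  have key := integral_image_eq_integral_abs_deriv_smul measurableSet_Ioi hder hinj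
    (fun t => (-(c * y) / t + t * y) *
      Real.exp (-(π * ((-(c * y) / t) ^ 2 + (t * y) ^ 2))) / t)
  rw [himg] at key
  refine self_eq_neg.mp (key.trans ?_)
  rw [← integral_neg]
  refine setIntegral_congr_fun measurableSet_Ioi fun t ht => ?_
  have ht0 : 0 < t := ht
  have h1 : -(c * y) / (c / t) = -(t * y) := by
    field_simp
  have h2 : c / t * y = -(-(c * y) / t) := by
    field_simp
  simp only [smul_eq_mul]
  rw [h1, h2, abs_neg, abs_of_pos (by positivity), neg_sq, neg_sq, add_comm ((t * y) ^ 2)]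
  field_simp
  ring



/-- Lemma 3.16.
For nonzero `x, y : ℝ`: if `x·y > 0` then
`∫₀^∞ (x/t + t·y) · exp (−π ((x/t)² + (t·y)²)) dt/t = sgn x · exp (−2π x y)`,
and if `x·y < 0` the integral vanishes. -/
theorem stmt_14 (x y : ℝ) (hx : x ≠ 0) (hy : y ≠ 0) :
    (x * y > 0 →
      ∫ t in Set.Ioi (0 : ℝ),
          (x / t + t * y) * Real.exp (-(π * ((x / t) ^ 2 + (t * y) ^ 2))) / t
        = Real.sign x * Real.exp (-(2 * π * x * y))) ∧
    (x * y < 0 →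
      ∫ t in Set.Ioi (0 : ℝ),
          (x / t + t * y) * Real.exp (-(π * ((x / t) ^ 2 + (t * y) ^ 2))) / t
        = 0) := by
  refine ⟨fun hxy => ?_, integral_of_mul_neg x y⟩
  rcases lt_or_gt_of_ne hx with h | h
  · have hy' : y < 0 := neg_of_mul_pos_right hxy h.le
    have key := integral_of_pos (-x) (-y) (neg_pos.mpr h) (neg_pos.mpr hy')
    rw [Real.sign_of_neg h, neg_one_mul]
    have e : -(2 * π * -x * -y) = -(2 * π * x * y) := by ring
    rw [e] at key
    rw [← key, ← integral_neg]
    congr 1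
    ext t
    rw [neg_div, mul_neg, neg_sq, neg_sq]
    ring
  · rw [Real.sign_of_pos h, one_mul]
    exact integral_of_pos x y h (pos_of_mul_pos_right hxy h.le)
end
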